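/- arXiv:1609.05942 — 2 statements merged into one kernel-verified Lean document; each statement's English description precedes it below -/
import Mathlib

section
/- Let R be a commutative ring, s : ℕ with s ≥ 1, a : Fin s → R and b ∈ R, and let M be the gadget matrix associated with a and b. Then HC^{(2)}(M) = b^2 * (Σ_{i : Fin s} (a i)^2). In particular, if Σ_{i} (a i)^2 = 0 then HC^{(2)}(M) = 0. -/
open scoped BigOperators

open Classical in
/-- The Hamiltonian cycle polynomial evaluated at a matrix `A : V → V → R`:
the sum over all full cycles `π` of `∏ v, A v (π v)`. -/
noncomputable def HCval {V R : Type*} [Fintype V] [CommRing R] (A : V → V → R) : R :=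
  ∑ π ∈ Finset.univ.filter (fun π : Equiv.Perm V => π.IsCycle ∧ π.support = Finset.univ),
    ∏ v : V, A v (π v)

open Classical in
/-- `HC^{(2)}` evaluated at a matrix `A : V → V → R`:
the sum over all full cycles `π` of `∏ v, (A v (π v))²`. -/
noncomputable def HC2val {V R : Type*} [Fintype V] [CommRing R] (A : V → V → R) : R :=
  ∑ π ∈ Finset.univ.filter (fun π : Equiv.Perm V => π.IsCycle ∧ π.support = Finset.univ),
    ∏ v : V, (A v (π v)) ^ 2

/-- The gadget matrix: `M 0 0 = 0`, `M 0 (succ j) = b`, `M (succ i) 0 = a i`, and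
`M (succ i) (succ j) = 1` iff `j` is the cyclic predecessor of `i` in `Fin s`
(i.e. `(j + 1) % s = i`), and `0` otherwise. -/
def gadget {R : Type*} [CommRing R] {s : ℕ} (a : Fin s → R) (b : R) :
    Fin (s + 1) → Fin (s + 1) → R := fun i j =>
  Fin.cases
    (Fin.cases 0 (fun _ => b) j)
    (fun i' => Fin.cases (a i')
      (fun j' => if (j'.val + 1) % s = i'.val then 1 else 0) j)
    i

/-!
In the gadget matrix, deleting the row and column of `0` leaves the permutation matrix of one full
cycle `σ` of the remaining vertices, the inverse of the rotation. A full cycle with a nonzero weight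
must therefore follow `σ` except where it visits `0`, so it arises from `σ` by inserting `0` into
one of its arcs `i → σ i`. Such a cycle has weight `b ^ 2 * a i ^ 2`, and every arc occurs once.
-/

open Equiv Finset

theorem isCycleOn_univ_iff_isCycle_and_forall_ne {V : Type*} [Nontrivial V] (π : Perm V) :
    π.IsCycleOn Set.univ ↔ π.IsCycle ∧ ∀ v, π v ≠ v := by
  constructor
  · intro hπ
    exact ⟨Perm.isCycle_iff_exists_isCycleOn.mpr
        ⟨Set.univ, Set.nontrivial_univ, hπ, fun v _ => Set.mem_univ v⟩,
      fun v => hπ.apply_ne Set.nontrivial_univ (Set.mem_univ v)⟩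
  · rintro ⟨hcycle, hne⟩
    have hmoves : {v | π v ≠ v} = Set.univ := Set.eq_univ_of_forall hne
    exact hmoves ▸ hcycle.isCycleOn

theorem isCycleOn_finRotate : ∀ n : ℕ, (finRotate n).IsCycleOn Set.univ
  | 0 => Perm.isCycleOn_of_subsingleton _ _
  | 1 => Perm.isCycleOn_of_subsingleton _ _
  | _ + 2 => (isCycleOn_univ_iff_isCycle_and_forall_ne _).mpr
      ⟨isCycle_finRotate, fun v => Perm.mem_support.mp (support_finRotate ▸ mem_univ v)⟩

theorem equiv_eq_of_forall_ne {α β : Type*} {f g : α ≃ β} (a : α) (h : ∀ x, x ≠ a → f x = g x) :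
    f = g := by
  have ha : f a = g a := by
    obtain ⟨y, hy⟩ := f.surjective (g a)
    by_cases hya : y = a
    · rwa [hya] at hy
    · exact absurd (g.injective ((h y hya).symm.trans hy)) hya
  ext x
  by_cases hx : x = a
  · rw [hx, ha]
  · exact h x hx

section InsertZero

variable {n : ℕ} (σ : Perm (Fin n)) (i j : Fin n)

/-- The permutation of `Fin (n + 1)` obtained from a permutation `σ` of the successors by inserting
`0` into the arc `i → σ i`, which becomes `i → 0 → σ i`. -/
def insertZero : Perm (Fin (n + 1)) :=
  Perm.decomposeFin.symm ((σ i).succ, σ)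

theorem insertZero_zero : insertZero σ i 0 = (σ i).succ :=
  Perm.decomposeFin_symm_apply_zero _ _

theorem insertZero_succ_self : insertZero σ i i.succ = 0 := by
  rw [insertZero, Perm.decomposeFin_symm_apply_succ, swap_apply_right]

variable {i j} in
theorem insertZero_succ_of_ne (h : j ≠ i) : insertZero σ i j.succ = (σ j).succ := by
  have hσ : (σ j).succ ≠ (σ i).succ := fun h' => h (σ.injective (Fin.succ_injective n h'))
  rw [insertZero, Perm.decomposeFin_symm_apply_succ,
    swap_apply_of_ne_of_ne (Fin.succ_ne_zero _) hσ]

theorem insertZero_injective : Function.Injective (insertZero σ) := by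
  intro i j h
  have hzero : (σ i).succ = (σ j).succ := by
    rw [← insertZero_zero, ← insertZero_zero, h]
  exact σ.injective (Fin.succ_injective n hzero)

variable {σ} in
theorem mem_range_insertZero {π : Perm (Fin (n + 1))} (hzero : π 0 ≠ 0)
    (hsucc : ∀ j, π j.succ = 0 ∨ π j.succ = (σ j).succ) : π ∈ Set.range (insertZero σ) := by
  obtain ⟨x, hx⟩ := π.surjective 0
  obtain ⟨i, rfl⟩ := Fin.exists_succ_eq.mpr fun h : x = 0 => hzero (h ▸ hx)
  refine ⟨i, equiv_eq_of_forall_ne 0 fun y hy => ?_⟩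
  obtain ⟨j, rfl⟩ := Fin.exists_succ_eq.mpr hy
  by_cases hji : j = i
  · rw [hji, insertZero_succ_self, hx]
  · have hj : π j.succ ≠ 0 := fun h =>
      hji (Fin.succ_injective n (π.injective (h.trans hx.symm)))
    rw [insertZero_succ_of_ne σ hji, (hsucc j).resolve_left hj]

theorem sameCycle_insertZero_succ_apply : (insertZero σ i).SameCycle j.succ (σ j).succ := by
  by_cases hji : j = i
  · refine ⟨2, ?_⟩
    rw [hji, zpow_ofNat, pow_two, Perm.mul_apply, insertZero_succ_self, insertZero_zero]
  · exact ⟨1, by rw [zpow_one, insertZero_succ_of_ne σ hji]⟩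

variable {σ} in
theorem sameCycle_insertZero_succ {x y : Fin n} (h : σ.SameCycle x y) :
    (insertZero σ i).SameCycle x.succ y.succ := by
  obtain ⟨k, rfl⟩ := h.exists_nat_pow_eq
  induction k with
  | zero => exact Perm.SameCycle.rfl
  | succ k ih =>
    rw [pow_succ', Perm.mul_apply]
    exact (ih ⟨k, rfl⟩).trans (sameCycle_insertZero_succ_apply σ i _)

variable {σ} in
theorem isCycleOn_insertZero (hσ : σ.IsCycleOn Set.univ) :
    (insertZero σ i).IsCycleOn Set.univ := by
  have hzero : ∀ x, (insertZero σ i).SameCycle 0 x := by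
    intro x
    cases x using Fin.cases with
    | zero => exact Perm.SameCycle.rfl
    | succ j =>
      have hij : (insertZero σ i).SameCycle i.succ j.succ :=
        sameCycle_insertZero_succ i (hσ.2 (Set.mem_univ i) (Set.mem_univ j))
      rwa [← Perm.sameCycle_apply_left, insertZero_succ_self] at hij
  exact ⟨Set.bijOn_univ.mpr (insertZero σ i).bijective,
    fun x _ y _ => (hzero x).symm.trans (hzero y)⟩

theorem prod_insertZero {M : Type*} [CommMonoid M] (A : Fin (n + 1) → Fin (n + 1) → M) :
    ∏ v, A v (insertZero σ i v) =
      A 0 (σ i).succ * (A i.succ 0 * ∏ j ∈ univ.erase i, A j.succ (σ j).succ) := by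
  rw [Fin.prod_univ_succ, insertZero_zero, ← mul_prod_erase univ _ (mem_univ i),
    insertZero_succ_self]
  congr 2
  exact prod_congr rfl fun j hj => by rw [insertZero_succ_of_ne σ (ne_of_mem_erase hj)]

end InsertZero

section HamiltonianCyclePolynomial

variable {R : Type*} [CommRing R]

theorem HC2val_eq_HCval_sq {V : Type*} [Fintype V] (A : V → V → R) :
    HC2val A = HCval fun u v => A u v ^ 2 :=
  rfl

theorem HCval_eq_sum_of_injective {V ι : Type*} [Fintype V] [Fintype ι] {f : ι → Perm V}
    (hf : Function.Injective f) (hfull : ∀ i, (f i).IsCycle ∧ ∀ v, f i v ≠ v) {A : V → V → R}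
    (hA : ∀ π : Perm V, π.IsCycle → (∀ v, π v ≠ v) → π ∉ Set.range f → ∃ v, A v (π v) = 0) :
    HCval A = ∑ i, ∏ v, A v (f i v) := by
  classical
  refine (sum_of_injOn f hf.injOn ?_ ?_ fun i _ => rfl).symm
  · intro i _
    rw [mem_coe, mem_filter]
    exact ⟨mem_univ _, (hfull i).1,
      eq_univ_of_forall fun v => Perm.mem_support.mpr ((hfull i).2 v)⟩
  · intro π hπ hrange
    rw [coe_univ, Set.image_univ] at hrange
    obtain ⟨-, hcycle, hsupport⟩ := mem_filter.mp hπ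
    obtain ⟨v, hv⟩ :=
      hA π hcycle (fun v => Perm.mem_support.mp (hsupport ▸ mem_univ v)) hrange
    exact prod_eq_zero (mem_univ v) hv

theorem HCval_eq_sum_insertZero {n : ℕ} {σ : Perm (Fin n)} (hσ : σ.IsCycleOn Set.univ)
    {A : Fin (n + 1) → Fin (n + 1) → R} (hA : ∀ i j, j ≠ σ i → A i.succ j.succ = 0) :
    HCval A =
      ∑ i, A 0 (σ i).succ * (A i.succ 0 * ∏ j ∈ univ.erase i, A j.succ (σ j).succ) := by
  have hfull : ∀ i, (insertZero σ i).IsCycle ∧ ∀ v, insertZero σ i v ≠ v := by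
    intro i
    have : Nontrivial (Fin (n + 1)) := ⟨0, i.succ, (Fin.succ_ne_zero i).symm⟩
    exact (isCycleOn_univ_iff_isCycle_and_forall_ne _).mp (isCycleOn_insertZero i hσ)
  rw [HCval_eq_sum_of_injective (insertZero_injective σ) hfull]
  · exact sum_congr rfl fun i _ => prod_insertZero σ i A
  · intro π _ hne hrange
    obtain ⟨j, hj_zero, hj_succ⟩ : ∃ j, π j.succ ≠ 0 ∧ π j.succ ≠ (σ j).succ := by
      by_contra! h
      exact hrange (mem_range_insertZero (hne 0) fun j => or_iff_not_imp_left.mpr (h j))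
    obtain ⟨k, hk⟩ := Fin.exists_succ_eq.mpr hj_zero
    refine ⟨j.succ, ?_⟩
    rw [← hk] at hj_succ ⊢
    exact hA j k fun h => hj_succ (h ▸ rfl)

end HamiltonianCyclePolynomial

section Gadget

variable {R : Type*} [CommRing R] {s : ℕ} (a : Fin s → R) (b : R) (i j : Fin s)

theorem gadget_zero_succ : gadget a b 0 j.succ = b :=
  rfl

theorem gadget_succ_zero : gadget a b i.succ 0 = a i :=
  rfl

theorem gadget_succ_succ :
    gadget a b i.succ j.succ = if j = (finRotate s)⁻¹ i then 1 else 0 := by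
  have hpred : (j.val + 1) % s = i.val ↔ j = (finRotate s)⁻¹ i := by
    have := j.neZero
    rw [Perm.eq_inv_iff_eq, finRotate_apply, Fin.ext_iff, Fin.val_add, Fin.val_one',
      Nat.add_mod_mod]
  exact if_congr hpred rfl rfl

theorem HC2val_gadget : HC2val (gadget a b) = b ^ 2 * ∑ i, a i ^ 2 := by
  have hoff : ∀ i j : Fin s, j ≠ (finRotate s)⁻¹ i → gadget a b i.succ j.succ ^ 2 = 0 :=
    fun i j h => by rw [gadget_succ_succ, if_neg h, zero_pow two_ne_zero]
  rw [HC2val_eq_HCval_sq, HCval_eq_sum_insertZero (isCycleOn_finRotate s).inv hoff, mul_sum]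
  simp only [gadget_zero_succ, gadget_succ_zero, gadget_succ_succ, if_true, one_pow, prod_const_one,
    mul_one]

end Gadget

/-- `HC^{(2)}` of the gadget matrix is `b² * Σ_i (a i)²`; in particular it vanishes
when `Σ_i (a i)² = 0`. -/
theorem stmt11 {R : Type*} [CommRing R] (s : ℕ) (hs : 1 ≤ s) (a : Fin s → R) (b : R) :
    HC2val (gadget a b) = b ^ 2 * ∑ i : Fin s, (a i) ^ 2 ∧
      ((∑ i : Fin s, (a i) ^ 2) = 0 → HC2val (gadget a b) = 0) := by
  have hHC := HC2val_gadget a b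
  exact ⟨hHC, fun ha => by rw [hHC, ha, mul_zero]⟩
end

section
/- Let F be a field, s : ℕ with s ≥ 1, and a : Fin s → F with Σ_{i} a i ≠ 0 and Σ_{i} (a i)^2 = 0. Then for every t ≥ 2, setting N := s + t + 3, there exists a projection substitution θ : (Fin N × Fin N) → MvPolynomial (Fin t × Fin t) F such that MvPolynomial.aeval θ Q_N = HC_t. In other words, HC_t is a projection of Q_N. -/
/-!
A Hamiltonian cycle sum over `t` vertices is blown up to one over `t + s` vertices: a path of
weight-one arcs is put in front of a vertex `u`, together with one extra vertex `v` which may be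
visited on the way to `u` at any of `s` places, at cost `a i` for the `i`-th one. A Hamiltonian
cycle visits `v` exactly once, so the sum is multiplied by `∑ i, a i`. Since all other new weights
are `0` or `1`, squaring every entry multiplies the sum of squares by `∑ i, a i ^ 2 = 0`, while
rescaling `a` makes the first factor equal to `1`.
-/

open scoped BigOperators

open Classical in
/-- The set of all `n`-cycles in `Equiv.Perm (Fin n)`. -/
noncomputable def nCycles (n : ℕ) : Finset (Equiv.Perm (Fin n)) :=
  Finset.univ.filter fun π => π.IsCycle ∧ π.support = Finset.univ

/-- The Hamiltonian cycle polynomial `HC_n`. -/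
noncomputable def HC (R : Type*) [CommRing R] (n : ℕ) : MvPolynomial (Fin n × Fin n) R :=
  ∑ π ∈ nCycles n, ∏ i : Fin n, MvPolynomial.X (i, π i)

/-- `HC_n^{(2)}`, with every variable squared. -/
noncomputable def HC2 (R : Type*) [CommRing R] (n : ℕ) : MvPolynomial (Fin n × Fin n) R :=
  ∑ π ∈ nCycles n, ∏ i : Fin n, (MvPolynomial.X (i, π i)) ^ 2

/-- `Q_n := HC_n + HC_n^{(2)}`. -/
noncomputable def Q (R : Type*) [CommRing R] (n : ℕ) : MvPolynomial (Fin n × Fin n) R :=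
  HC R n + HC2 R n

/-- A projection substitution sends each variable to a variable or a constant. -/
def IsProjection {σ τ F : Type*} [CommSemiring F] (θ : σ → MvPolynomial τ F) : Prop :=
  ∀ v : σ, (∃ k : τ, θ v = MvPolynomial.X k) ∨ (∃ c : F, θ v = MvPolynomial.C c)

section SingleOrbit

open Equiv.Perm

theorem isCycleOn_univ_iff_forall_invariant {α : Type*} {π : Equiv.Perm α} :
    π.IsCycleOn Set.univ ↔
      ∀ s : Set α, (∀ x, π x ∈ s ↔ x ∈ s) → s.Nonempty → s = Set.univ := by
  constructor
  · rintro hπ s hs ⟨x, hx⟩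
    refine Set.eq_univ_of_forall fun y ↦ ?_
    obtain ⟨k, rfl⟩ := hπ.2 (Set.mem_univ x) (Set.mem_univ y)
    have hbij : Set.BijOn π s s := Equiv.bijOn π fun x ↦ hs x
    exact (hbij.perm_zpow k).mapsTo hx
  · refine fun h ↦ ⟨Set.bijOn_univ.2 π.bijective, fun x _ y _ ↦ ?_⟩
    have horbit := h {z | π.SameCycle x z} (fun _ ↦ sameCycle_apply_right) ⟨x, SameCycle.refl π x⟩
    exact Set.eq_univ_iff_forall.1 horbit y

theorem isCycle_and_support_eq_univ_iff {α : Type*} [Fintype α] [DecidableEq α] [Nontrivial α]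
    {π : Equiv.Perm α} :
    π.IsCycle ∧ π.support = Finset.univ ↔ π.IsCycleOn Set.univ := by
  have hsupp : π.support = Finset.univ ↔ ∀ x, π x ≠ x := by
    simp [Finset.eq_univ_iff_forall]
  rw [hsupp]
  constructor
  · rintro ⟨hcycle, hmove⟩
    simpa [hmove] using hcycle.isCycleOn
  · intro h
    exact ⟨isCycle_iff_exists_isCycleOn.2 ⟨_, Set.nontrivial_univ, h, fun _ _ ↦ Set.mem_univ _⟩,
      fun x ↦ h.apply_ne Set.nontrivial_univ (Set.mem_univ x)⟩

variable {n : ℕ}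

theorem not_isCycleOn_univ_decomposeFin_symm_zero (hn : n ≠ 0) (σ : Equiv.Perm (Fin n)) :
    ¬ (decomposeFin.symm (0, σ)).IsCycleOn Set.univ := by
  intro h
  have : Nontrivial (Fin (n + 1)) := Fin.nontrivial_iff_two_le.2 (by omega)
  exact h.apply_ne Set.nontrivial_univ (Set.mem_univ 0) (decomposeFin_symm_apply_zero 0 σ)

theorem decomposeFin_symm_succ_apply_succ (w x : Fin n) (σ : Equiv.Perm (Fin n)) :
    decomposeFin.symm (w.succ, σ) x.succ = if σ x = w then 0 else (σ x).succ := by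
  simp [Equiv.swap_apply_def]

theorem isCycleOn_univ_decomposeFin_symm_succ {w : Fin n} {σ : Equiv.Perm (Fin n)} :
    (decomposeFin.symm (w.succ, σ)).IsCycleOn Set.univ ↔ σ.IsCycleOn Set.univ := by
  simp only [isCycleOn_univ_iff_forall_invariant]
  constructor
  · rintro h s hs ⟨x, hx⟩
    have hpre := h ((Fin.cons w id : Fin (n + 1) → Fin n) ⁻¹' s) (fun y ↦ ?_) ⟨x.succ, by simpa⟩
    · exact Set.eq_univ_of_forall fun y ↦ by simpa using Set.eq_univ_iff_forall.1 hpre y.succ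
    · cases y using Fin.cases with
      | zero => simp
      | succ z =>
        rw [decomposeFin_symm_succ_apply_succ]
        split_ifs with hz <;> simp [← hs z, hz]
  · rintro h s hs ⟨x, hx⟩
    have hzero : w.succ ∈ s ↔ 0 ∈ s := by simpa using hs 0
    have hpre := h (Fin.succ ⁻¹' s) (fun z ↦ ?_) ?_
    · have hsucc (y : Fin n) : y.succ ∈ s := Set.eq_univ_iff_forall.1 hpre y
      exact Set.eq_univ_of_forall (Fin.cases (hzero.1 (hsucc w)) hsucc)
    · have hz := hs z.succ
      rw [decomposeFin_symm_succ_apply_succ] at hz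
      split_ifs at hz with hzw
      · simpa [hzw, hzero] using hz
      · exact hz
    · cases x using Fin.cases with
      | zero => exact ⟨w, hzero.2 hx⟩
      | succ z => exact ⟨z, hx⟩

end SingleOrbit

section HamiltonianCycleSum

open Equiv.Perm Matrix

variable {R : Type*} [CommRing R] {n : ℕ}

open Classical in
/-- The Hamiltonian cycle sum of a weighted digraph on `Fin n` with weight matrix `M`, which for
`2 ≤ n` is the value of `HC_n` at `M`. Cycles are encoded as permutations with a single orbit; for
`n ≤ 1` this counts the identity, unlike `nCycles`, so `hamSum_border` holds from `n = 1` on. -/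
noncomputable def hamSum (M : Matrix (Fin n) (Fin n) R) : R :=
  ∑ π : Equiv.Perm (Fin n) with π.IsCycleOn Set.univ, ∏ i, M i (π i)

/-- The bordered matrix with blocks `d`, `r` in the first row and `c`, `M` below it: a vertex `0`
with loop `d`, outgoing weights `r` and incoming weights `c` is added to the digraph of `M`. -/
def border (d : R) (r c : Fin n → R) (M : Matrix (Fin n) (Fin n) R) :
    Matrix (Fin (n + 1)) (Fin (n + 1)) R :=
  of (vecCons (vecCons d r) fun i ↦ vecCons (c i) (M i))

-- Contracting the arc `0 → w` lets `w` inherit the arcs that enter `0`.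
theorem hamSum_border (hn : n ≠ 0) (d : R) (r c : Fin n → R) (M : Matrix (Fin n) (Fin n) R) :
    hamSum (border d r c M) = ∑ w, r w * hamSum (M.updateCol w c) := by
  classical
  have hweight (w : Fin n) (σ : Equiv.Perm (Fin n)) :
      ∏ i, border d r c M i (decomposeFin.symm (w.succ, σ) i) =
        r w * ∏ i, M.updateCol w c i (σ i) := by
    rw [Fin.prod_univ_succ, decomposeFin_symm_apply_zero]
    refine congrArg (r w * ·) (Finset.prod_congr rfl fun i _ ↦ ?_)
    rw [decomposeFin_symm_succ_apply_succ, updateCol_apply]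
    split_ifs <;> simp [border]
  simp only [hamSum, Finset.sum_filter, ← Equiv.sum_comp decomposeFin.symm,
    Fintype.sum_prod_type, Fin.sum_univ_succ, not_isCycleOn_univ_decomposeFin_symm_zero hn,
    hweight, if_false, Finset.sum_const_zero, zero_add, Finset.mul_sum, mul_ite, mul_zero]
  exact Finset.sum_congr rfl fun w _ ↦ Finset.sum_congr rfl fun σ _ ↦
    if_congr isCycleOn_univ_decomposeFin_symm_succ rfl rfl

theorem hamSum_border_single (d b : R) (p : Fin n) (c : Fin n → R)
    (M : Matrix (Fin n) (Fin n) R) :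
    hamSum (border d (Pi.single p b) c M) = b * hamSum (M.updateCol p c) := by
  rw [hamSum_border p.pos.ne', Fintype.sum_eq_single p fun w hw ↦ by simp [hw],
    Pi.single_eq_same]

end HamiltonianCycleSum

section Gadgets

open Matrix

variable {R : Type*} [CommRing R] {n : ℕ}

/-- A new vertex `0` takes over the arcs entering `p`, and is left only by an arc to `p` of
weight `b`. The old arcs into `p` may stay, because no Hamiltonian cycle can use them. -/
def insertBefore (p : Fin n) (b : R) (M : Matrix (Fin n) (Fin n) R) :
    Matrix (Fin (n + 1)) (Fin (n + 1)) R :=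
  border 0 (Pi.single p b) (M.col p) M

/-- The arcs entering `p` are redirected to `v`, and `p` is entered only from `v`. -/
def forcedDetour (v p : Fin n) (M : Matrix (Fin n) (Fin n) R) : Matrix (Fin n) (Fin n) R :=
  (M.updateCol p (Pi.single v 1)).updateCol v (M.col p)

/-- A new vertex `0` takes over the arcs entering `p`, and is left either directly to `p` or,
with weight `b`, to `v` and from there to `p`. -/
def optionalDetour (v p : Fin n) (b : R) (M : Matrix (Fin n) (Fin n) R) :
    Matrix (Fin (n + 1)) (Fin (n + 1)) R :=
  border 0 (Function.update (Pi.single v b) p 1) (M.col p) (M.updateCol p (Pi.single v 1))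

theorem hamSum_insertBefore (p : Fin n) (b : R) (M : Matrix (Fin n) (Fin n) R) :
    hamSum (insertBefore p b M) = b * hamSum M := by
  rw [insertBefore, hamSum_border_single]
  exact congrArg (b * hamSum ·) (updateCol_eq_self M p)

theorem hamSum_optionalDetour {v p : Fin n} (hvp : v ≠ p) (b : R)
    (M : Matrix (Fin n) (Fin n) R) :
    hamSum (optionalDetour v p b M) = hamSum M + b * hamSum (forcedDetour v p M) := by
  have hdirect : (M.updateCol p (Pi.single v 1)).updateCol p (M.col p) = M := by
    rw [updateCol_idem]
    exact updateCol_eq_self M p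
  rw [optionalDetour, hamSum_border p.pos.ne', Fintype.sum_eq_add p v hvp.symm
    fun w hw ↦ by simp [hw.1, hw.2], hdirect]
  simp [hvp, forcedDetour]

theorem hamSum_forcedDetour_insertBefore (p : Fin n) (b : R) (M : Matrix (Fin n) (Fin n) R) :
    hamSum (forcedDetour 0 p.succ (insertBefore p b M)) = hamSum M := by
  have hborder : forcedDetour 0 p.succ (insertBefore p b M) =
      border b (Pi.single p 1) (M.col p) (M.updateCol p 0) := by
    ext i j
    cases i using Fin.cases <;> cases j using Fin.cases <;>
      simp +contextual [forcedDetour, insertBefore, border, updateCol_apply, Pi.single_apply,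
        col_apply]
  have hself : M.updateCol p (M.col p) = M := updateCol_eq_self M p
  rw [hborder, hamSum_border_single, updateCol_idem, hself, one_mul]

theorem hamSum_forcedDetour_optionalDetour {v p : Fin n} (hvp : v ≠ p) (b : R)
    (M : Matrix (Fin n) (Fin n) R) :
    hamSum (forcedDetour v.succ 0 (optionalDetour v p b M)) = hamSum (forcedDetour v p M) := by
  have hborder : forcedDetour v.succ 0 (optionalDetour v p b M) =
      border 0 (Pi.single p 1) (Pi.single v 1) (forcedDetour v p M) := by
    ext i j
    cases i using Fin.cases <;> cases j using Fin.cases <;>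
      simp only [forcedDetour, optionalDetour, border, updateCol_apply, Pi.single_apply,
        Function.update_apply, col_apply, of_apply, cons_val_zero, cons_val_succ, Fin.succ_inj] <;>
      grind
  have hself : (forcedDetour v p M).updateCol p (Pi.single v 1) = forcedDetour v p M := by
    rw [forcedDetour, updateCol_comm _ hvp, updateCol_idem]
  rw [hborder, hamSum_border_single, hself, one_mul]

theorem insertBefore_map (f : R →*₀ R) (p : Fin n) (b : R) (M : Matrix (Fin n) (Fin n) R) :
    (insertBefore p b M).map f = insertBefore p (f b) (M.map f) := by
  ext i j
  cases i using Fin.cases <;> cases j using Fin.cases <;>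
    simp [insertBefore, border, Pi.single_apply, col_apply, apply_ite f]

theorem optionalDetour_map (f : R →*₀ R) (v p : Fin n) (b : R) (M : Matrix (Fin n) (Fin n) R) :
    (optionalDetour v p b M).map f = optionalDetour v p (f b) (M.map f) := by
  ext i j
  cases i using Fin.cases <;> cases j using Fin.cases <;>
    simp [optionalDetour, border, Function.update_apply, updateCol_apply, Pi.single_apply,
      col_apply, apply_ite f]

end Gadgets

section Blowup

open Matrix

variable {R : Type*} [CommRing R] {P : R → Prop}

theorem forall_insertBefore {n : ℕ} (h0 : P 0) {p : Fin n} {b : R} (hb : P b)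
    {M : Matrix (Fin n) (Fin n) R} (hM : ∀ i j, P (M i j)) (i j : Fin (n + 1)) :
    P (insertBefore p b M i j) := by
  cases i using Fin.cases <;> cases j using Fin.cases <;>
    simp only [insertBefore, border, of_apply, cons_val_zero, cons_val_succ, col_apply,
      Pi.single_apply] <;> (try split_ifs) <;> simp only [*]

theorem forall_optionalDetour {n : ℕ} (h0 : P 0) (h1 : P 1) {v p : Fin n} {b : R} (hb : P b)
    {M : Matrix (Fin n) (Fin n) R} (hM : ∀ i j, P (M i j)) (i j : Fin (n + 1)) :
    P (optionalDetour v p b M i j) := by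
  cases i using Fin.cases <;> cases j using Fin.cases <;>
    simp only [optionalDetour, border, of_apply, cons_val_zero, cons_val_succ, col_apply,
      updateCol_apply, Function.update_apply, Pi.single_apply] <;>
    (try split_ifs) <;> simp only [*]

-- The sum over the forced detour at `v`, `p` is carried along because it is what the next weight of
-- `a` gets multiplied with when an optional detour is inserted there.
theorem exists_hamSum_map_eq_sum_mul_and_forcedDetour (h0 : P 0) (h1 : P 1) {t : ℕ} (u : Fin t)
    {X : Matrix (Fin t) (Fin t) R} (hX : ∀ i j, P (X i j)) :
    ∀ {s : ℕ} (a : Fin (s + 1) → R), (∀ i, P (a i)) →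
      ∃ (M : Matrix (Fin (t + (s + 1))) (Fin (t + (s + 1))) R) (v p : Fin (t + (s + 1))),
        v ≠ p ∧ (∀ i j, P (M i j)) ∧ ∀ f : R →*₀ R,
          hamSum (M.map f) = (∑ i, f (a i)) * hamSum (X.map f) ∧
            hamSum (forcedDetour v p (M.map f)) = hamSum (X.map f)
  | 0, a, ha => by
    refine ⟨insertBefore u (a 0) X, 0, u.succ, (Fin.succ_ne_zero u).symm,
      forall_insertBefore h0 (ha 0) hX, fun f ↦ ?_⟩
    rw [insertBefore_map]
    exact ⟨by simp [hamSum_insertBefore], hamSum_forcedDetour_insertBefore u _ _⟩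
  | s + 1, a, ha => by
    obtain ⟨M, v, p, hvp, hM, hsum⟩ := exists_hamSum_map_eq_sum_mul_and_forcedDetour h0 h1 u hX
      (Fin.tail a) fun i ↦ ha i.succ
    refine ⟨optionalDetour v p (a 0) M, v.succ, 0, Fin.succ_ne_zero v,
      forall_optionalDetour h0 h1 (ha 0) hM, fun f ↦ ?_⟩
    obtain ⟨hfree, hforced⟩ := hsum f
    rw [optionalDetour_map, hamSum_optionalDetour hvp, hamSum_forcedDetour_optionalDetour hvp,
      hfree, hforced, Fin.sum_univ_succ (n := s + 1)]
    exact ⟨by simp only [Fin.tail]; ring, rfl⟩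

theorem exists_hamSum_map_eq_of_le (h0 : P 0) (h1 : P 1) {m n : ℕ} (hm : m ≠ 0) (hmn : m ≤ n)
    {M : Matrix (Fin m) (Fin m) R} (hM : ∀ i j, P (M i j)) :
    ∃ M' : Matrix (Fin n) (Fin n) R, (∀ i j, P (M' i j)) ∧
      ∀ f : R →*₀ R, hamSum (M'.map f) = hamSum (M.map f) := by
  induction n, hmn using Nat.le_induction with
  | base => exact ⟨M, hM, fun _ ↦ rfl⟩
  | succ n hmn ih =>
    obtain ⟨M', hM', hsum⟩ := ih
    refine ⟨insertBefore ⟨0, by omega⟩ 1 M', forall_insertBefore h0 h1 hM', fun f ↦ ?_⟩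
    rw [insertBefore_map, hamSum_insertBefore, map_one, one_mul, hsum f]

theorem exists_hamSum_map_eq_sum_mul (h0 : P 0) (h1 : P 1) {s t N : ℕ} (hs : 1 ≤ s) (ht : 1 ≤ t)
    (hN : s + t ≤ N) {X : Matrix (Fin t) (Fin t) R} (hX : ∀ i j, P (X i j)) {a : Fin s → R}
    (ha : ∀ i, P (a i)) :
    ∃ M : Matrix (Fin N) (Fin N) R, (∀ i j, P (M i j)) ∧
      ∀ f : R →*₀ R, hamSum (M.map f) = (∑ i, f (a i)) * hamSum (X.map f) := by
  obtain ⟨s, rfl⟩ := Nat.exists_eq_add_of_le' hs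
  obtain ⟨M, _, _, _, hM, hsum⟩ :=
    exists_hamSum_map_eq_sum_mul_and_forcedDetour h0 h1 ⟨0, ht⟩ hX a ha
  obtain ⟨M', hM', hsum'⟩ := exists_hamSum_map_eq_of_le h0 h1 (by omega) (by omega : _ ≤ N) hM
  exact ⟨M', hM', fun f ↦ (hsum' f).trans (hsum f).1⟩

end Blowup

section Projection

open Matrix MvPolynomial

variable {R : Type*} [CommRing R]

theorem mem_nCycles_iff {n : ℕ} (hn : 2 ≤ n) {π : Equiv.Perm (Fin n)} :
    π ∈ nCycles n ↔ π.IsCycleOn Set.univ := by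
  have : Nontrivial (Fin n) := Fin.nontrivial_iff_two_le.2 hn
  rw [← isCycle_and_support_eq_univ_iff]
  simp [nCycles]

theorem sum_nCycles_prod {n : ℕ} (hn : 2 ≤ n) (M : Matrix (Fin n) (Fin n) R) :
    ∑ π ∈ nCycles n, ∏ i, M i (π i) = hamSum M :=
  Finset.sum_congr (by ext π; simp [mem_nCycles_iff hn]) fun _ _ ↦ rfl

theorem HC_eq_hamSum {n : ℕ} (hn : 2 ≤ n) : HC R n = hamSum (mvPolynomialX (Fin n) (Fin n) R) :=
  sum_nCycles_prod hn (mvPolynomialX (Fin n) (Fin n) R)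

theorem HC2_eq_hamSum {n : ℕ} (hn : 2 ≤ n) :
    HC2 R n = hamSum ((mvPolynomialX (Fin n) (Fin n) R).map (· ^ 2)) := by
  simp only [HC2, ← sum_nCycles_prod hn, map_apply, mvPolynomialX_apply]

theorem aeval_Q {S : Type*} [CommRing S] [Algebra R S] {n : ℕ} (hn : 2 ≤ n)
    (M : Matrix (Fin n) (Fin n) S) :
    aeval (fun v ↦ M v.1 v.2) (Q R n) = hamSum M + hamSum (M.map (· ^ 2)) := by
  simp only [Q, HC, HC2, map_add, map_sum, map_prod, map_pow, aeval_X, ← sum_nCycles_prod hn,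
    map_apply]

theorem exists_isProjection_aeval_Q_eq {s t N : ℕ} (hs : 1 ≤ s) (ht : 2 ≤ t) (hN : s + t ≤ N)
    (a : Fin s → R) :
    ∃ θ : Fin N × Fin N → MvPolynomial (Fin t × Fin t) R, IsProjection θ ∧
      aeval θ (Q R N) = C (∑ i, a i) * HC R t + C (∑ i, a i ^ 2) * HC2 R t := by
  obtain ⟨M, hM, hsum⟩ := exists_hamSum_map_eq_sum_mul
    (P := fun f : MvPolynomial (Fin t × Fin t) R ↦ (∃ k, f = X k) ∨ ∃ r, f = C r)
    (Or.inr ⟨0, C_0.symm⟩) (Or.inr ⟨1, C_1.symm⟩) hs (one_le_two.trans ht) hN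
    (X := mvPolynomialX (Fin t) (Fin t) R) (fun i j ↦ Or.inl ⟨(i, j), rfl⟩)
    (a := fun i ↦ C (a i)) fun i ↦ Or.inr ⟨a i, rfl⟩
  refine ⟨fun v ↦ M v.1 v.2, fun v ↦ hM v.1 v.2, ?_⟩
  have hid : ⇑(MonoidWithZeroHom.id (MvPolynomial (Fin t × Fin t) R)) = id := rfl
  have hlinear : hamSum M = C (∑ i, a i) * HC R t := by
    simpa only [hid, map_id, id_eq, ← map_sum, ← HC_eq_hamSum ht] using
      hsum (MonoidWithZeroHom.id _)
  have hsquare : hamSum (M.map (· ^ 2)) = C (∑ i, a i ^ 2) * HC2 R t := by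
    simpa only [coe_powMonoidWithZeroHom, ← map_pow, ← map_sum, ← HC2_eq_hamSum ht] using
      hsum (powMonoidWithZeroHom two_ne_zero)
  rw [aeval_Q (by omega), hlinear, hsquare]

theorem stmt12_general (s : ℕ) (hs : 1 ≤ s) (a : Fin s → R) (ha : IsUnit (∑ i, a i))
    (ha2 : ∑ i, a i ^ 2 = 0) (t : ℕ) (ht : 2 ≤ t) (N : ℕ) (hN : s + t ≤ N) :
    ∃ θ : Fin N × Fin N → MvPolynomial (Fin t × Fin t) R,
      IsProjection θ ∧ aeval θ (Q R N) = HC R t := by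
  obtain ⟨c, hc⟩ := ha.exists_left_inv
  obtain ⟨θ, hθ, hQ⟩ := exists_isProjection_aeval_Q_eq hs ht hN fun i ↦ c * a i
  have hlinear : ∑ i, c * a i = 1 := by rw [← Finset.mul_sum, hc]
  have hsquare : ∑ i, (c * a i) ^ 2 = 0 := by simp only [mul_pow, ← Finset.mul_sum, ha2, mul_zero]
  refine ⟨θ, hθ, ?_⟩
  rw [hQ, hlinear, hsquare, C_1, C_0, one_mul, zero_mul, add_zero]

end Projection

/-- If `F` has elements `a₁, …, a_s` with `Σ aᵢ ≠ 0` and `Σ aᵢ² = 0`, then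
`HC_t` is a projection of `Q_{s+t+3}`. -/
theorem stmt12 {F : Type*} [Field F] (s : ℕ) (hs : 1 ≤ s) (a : Fin s → F)
    (ha : (∑ i : Fin s, a i) ≠ 0) (ha2 : (∑ i : Fin s, (a i) ^ 2) = 0)
    (t : ℕ) (ht : 2 ≤ t) :
    ∃ θ : Fin (s + t + 3) × Fin (s + t + 3) → MvPolynomial (Fin t × Fin t) F,
      IsProjection θ ∧ MvPolynomial.aeval θ (Q F (s + t + 3)) = HC F t := by
  exact stmt12_general s hs a ha.isUnit ha2 t ht (s + t + 3) (by omega)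
end
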